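/- Reconstruction theorem (coordinate form): Let (φ,Φ) be a local morphism from the local Lie algebroid data (ρ,C) on ℝ^n with fiber ℝ^m to the local Lie algebroid data (ρ',C') on ℝ^{n'} with fiber ℝ^{m'}. Let L' : ℝ^{n'} × ℝ^{m'} → ℝ be C² and L(x,y) := L'(φ(x), Φ(x)y). Let (x,y) : [t₀,t₁] → ℝ^n × ℝ^m be an admissible C¹ curve. If the image curve (φ ∘ x, t ↦ Φ(x(t)) y(t)) is a solution of Lagrange's equations for L', then (x,y) itself is a solution of Lagrange's equations for L. -/

import Mathlib

/-!
Write `p_β = ∂L'/∂y'^β` and `q_k = ∂L'/∂x'^k` along the image curve. The chain rule gives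
`∂L/∂y^α = Σ_β p_β Φ^β_α` and `∂L/∂x^i = Σ_k q_k ∂_iφ^k + Σ_{β,δ} p_β ∂_iΦ^β_δ y^δ`
(`pLy_pullback`, `pLx_pullback`). Differentiating the first formula along the curve, with
`(x^i)' = Σ_δ ρ^i_δ y^δ` by admissibility and `p_β'` given by Lagrange's equations for `L'`,
turns the equation for `L` into an identity linear in `p` and `q`. The coefficient of `q_k`
vanishes by the admissibility condition on `(φ, Φ)`, and the coefficient of `p_b y^δ` is the
left side of the morphism condition for the indices `b, α, δ`; this is
`lagrange_pullback_algebra`.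
-/

open Set

/-- Partial derivative of a scalar function on `ℝ^n` in the `j`-th coordinate direction. -/
noncomputable def pderiv' {n : ℕ} (f : (Fin n → ℝ) → ℝ) (x : Fin n → ℝ) (j : Fin n) : ℝ :=
  deriv (fun s => f (Function.update x j s)) (x j)

/-- Local Lie algebroid data on `ℝ^n` with fiber `ℝ^m`: smooth anchor coefficients
`ρ^i_α` and smooth structure functions `C^α_{βγ}`, antisymmetric in the lower indices. -/
structure LocalAlgebroidData (n m : ℕ) where
  ρ : (Fin n → ℝ) → Fin n → Fin m → ℝ
  C : (Fin n → ℝ) → Fin m → Fin m → Fin m → ℝ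
  smooth_ρ : ContDiff ℝ (⊤ : ℕ∞) ρ
  smooth_C : ContDiff ℝ (⊤ : ℕ∞) C
  antisymm : ∀ x α β γ, C x α β γ = - C x α γ β

/-- Partial derivative `∂L/∂x^i` of a Lagrangian `L : ℝ^n × ℝ^m → ℝ`. -/
noncomputable def pLx {n m : ℕ} (L : (Fin n → ℝ) × (Fin m → ℝ) → ℝ)
    (x : Fin n → ℝ) (y : Fin m → ℝ) (i : Fin n) : ℝ :=
  pderiv' (fun z => L (z, y)) x i

/-- Partial derivative `∂L/∂y^α` of a Lagrangian `L : ℝ^n × ℝ^m → ℝ`. -/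
noncomputable def pLy {n m : ℕ} (L : (Fin n → ℝ) × (Fin m → ℝ) → ℝ)
    (x : Fin n → ℝ) (y : Fin m → ℝ) (α : Fin m) : ℝ :=
  pderiv' (fun w => L (x, w)) y α

/-- The Euler–Lagrange expression
`EL_α(t) = d/dt[∂L/∂y^α] + Σ_{β,γ} C^γ_{αβ} y^β ∂L/∂y^γ − Σ_i ρ^i_α ∂L/∂x^i`
of a curve `(x,y)`. -/
noncomputable def ELexpr {n m : ℕ} (A : LocalAlgebroidData n m)
    (L : (Fin n → ℝ) × (Fin m → ℝ) → ℝ)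
    (x : ℝ → Fin n → ℝ) (y : ℝ → Fin m → ℝ) (α : Fin m) (t : ℝ) : ℝ :=
  deriv (fun s => pLy L (x s) (y s) α) t
    + ∑ β, ∑ γ, A.C (x t) γ α β * y t β * pLy L (x t) (y t) γ
    - ∑ i, A.ρ (x t) i α * pLx L (x t) (y t) i

/-- The curve `(x,y)` is admissible on `[t₀,t₁]`: `(x^i)' = Σ_α ρ^i_α(x) y^α`. -/
def IsAdmissible {n m : ℕ} (A : LocalAlgebroidData n m) (t₀ t₁ : ℝ)
    (x : ℝ → Fin n → ℝ) (y : ℝ → Fin m → ℝ) : Prop :=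
  ∀ t ∈ Icc t₀ t₁, ∀ i, deriv (fun s => x s i) t = ∑ α, A.ρ (x t) i α * y t α

/-- `(x,y)` is a solution of Lagrange's equations for `L` on `[t₀,t₁]`. -/
def IsLagrangeSolution {n m : ℕ} (A : LocalAlgebroidData n m)
    (L : (Fin n → ℝ) × (Fin m → ℝ) → ℝ) (t₀ t₁ : ℝ)
    (x : ℝ → Fin n → ℝ) (y : ℝ → Fin m → ℝ) : Prop :=
  ∀ α, ∀ t ∈ Icc t₀ t₁,
    deriv (fun s => pLy L (x s) (y s) α) t
        + ∑ β, ∑ γ, A.C (x t) γ α β * y t β * pLy L (x t) (y t) γ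
      = ∑ i, A.ρ (x t) i α * pLx L (x t) (y t) i

/-- A local morphism of local Lie algebroid data: a pair of smooth maps `(φ, Φ)`
satisfying the admissibility and morphism conditions. -/
structure LocalMorphism {n m n' m' : ℕ}
    (A : LocalAlgebroidData n m) (A' : LocalAlgebroidData n' m') where
  φ : (Fin n → ℝ) → Fin n' → ℝ
  Φ : (Fin n → ℝ) → Fin m' → Fin m → ℝ
  smooth_φ : ContDiff ℝ (⊤ : ℕ∞) φ
  smooth_Φ : ContDiff ℝ (⊤ : ℕ∞) Φ
  adm : ∀ x (k : Fin n') (α : Fin m),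
    ∑ i, pderiv' (fun z => φ z k) x i * A.ρ x i α
      = ∑ β, A'.ρ (φ x) k β * Φ x β α
  morph : ∀ x (α : Fin m') (μ ν : Fin m),
    (∑ i, (A.ρ x i ν * pderiv' (fun z => Φ z α μ) x i
            - A.ρ x i μ * pderiv' (fun z => Φ z α ν) x i))
      + (∑ β, Φ x α β * A.C x β μ ν)
      - (∑ β, ∑ γ, A'.C (φ x) α β γ * Φ x β μ * Φ x γ ν) = 0

lemma hasDerivAt_pderiv' {n : ℕ} {f : (Fin n → ℝ) → ℝ} {x : Fin n → ℝ}
    (hf : DifferentiableAt ℝ f x) (j : Fin n) :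
    HasDerivAt (fun s => f (Function.update x j s)) (fderiv ℝ f x (Pi.single j 1)) (x j) := by
  have h1 : HasFDerivAt f (fderiv ℝ f x) (Function.update x j (x j)) := by
    simpa using hf.hasFDerivAt
  exact h1.comp_hasDerivAt (x j) (hasDerivAt_update x j (x j))

/-- On differentiable functions `pderiv'`, defined by a one-variable `deriv`, is the Fréchet
derivative in a coordinate direction. -/
lemma pderiv'_eq_fderiv {n : ℕ} {f : (Fin n → ℝ) → ℝ} {x : Fin n → ℝ}
    (hf : DifferentiableAt ℝ f x) (j : Fin n) :
    pderiv' f x j = fderiv ℝ f x (Pi.single j 1) :=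
  (hasDerivAt_pderiv' hf j).deriv

lemma fderiv_eq_sum_pderiv' {n : ℕ} {f : (Fin n → ℝ) → ℝ} {x : Fin n → ℝ}
    (hf : DifferentiableAt ℝ f x) (v : Fin n → ℝ) :
    fderiv ℝ f x v = ∑ i, pderiv' f x i * v i := by
  conv_lhs => rw [← Finset.univ_sum_single v]
  rw [map_sum]
  refine Finset.sum_congr rfl fun i _ => ?_
  have : (Pi.single i (v i) : Fin n → ℝ) = v i • Pi.single i (1 : ℝ) := by
    rw [← Pi.single_smul]; simp
  rw [this, map_smul, pderiv'_eq_fderiv hf, smul_eq_mul, mul_comm]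

lemma hasDerivAt_comp_pderiv' {n : ℕ} {f : (Fin n → ℝ) → ℝ} {g : ℝ → Fin n → ℝ}
    {g' : Fin n → ℝ} {t : ℝ} (hf : DifferentiableAt ℝ f (g t)) (hg : HasDerivAt g g' t) :
    HasDerivAt (fun s => f (g s)) (∑ i, pderiv' f (g t) i * g' i) t := by
  rw [← fderiv_eq_sum_pderiv' hf]
  exact hf.hasFDerivAt.comp_hasDerivAt t hg

lemma pLy_eq_fderiv {n m : ℕ} {L : (Fin n → ℝ) × (Fin m → ℝ) → ℝ} (hL : Differentiable ℝ L)
    (x : Fin n → ℝ) (y : Fin m → ℝ) (α : Fin m) :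
    pLy L x y α = fderiv ℝ L (x, y) (0, Pi.single α 1) := by
  have h1 : HasFDerivAt (fun z => L (x, z)) _ y :=
    (hL (x, y)).hasFDerivAt.comp y (hasFDerivAt_prodMk_right x y)
  rw [pLy, pderiv'_eq_fderiv h1.differentiableAt, h1.fderiv]
  simp

/-- Coordinate chain rule for a function of two vector arguments along a curve. -/
lemma hasDerivAt_lagrangian {n m : ℕ} {L : (Fin n → ℝ) × (Fin m → ℝ) → ℝ}
    (hL : Differentiable ℝ L) {u : ℝ → Fin n → ℝ} {v : ℝ → Fin m → ℝ}
    {u' : Fin n → ℝ} {v' : Fin m → ℝ} {t : ℝ}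
    (hu : HasDerivAt u u' t) (hv : HasDerivAt v v' t) :
    HasDerivAt (fun s => L (u s, v s))
      (∑ k, pLx L (u t) (v t) k * u' k + ∑ β, pLy L (u t) (v t) β * v' β) t := by
  have key : ∑ k, pLx L (u t) (v t) k * u' k + ∑ β, pLy L (u t) (v t) β * v' β
      = fderiv ℝ L (u t, v t) (u', v') := by
    have hx : HasFDerivAt (fun z => L (z, v t)) _ (u t) :=
      (hL (u t, v t)).hasFDerivAt.comp (u t) (hasFDerivAt_prodMk_left (u t) (v t))
    have hy : HasFDerivAt (fun z => L (u t, z)) _ (v t) :=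
      (hL (u t, v t)).hasFDerivAt.comp (v t) (hasFDerivAt_prodMk_right (u t) (v t))
    have ex := fderiv_eq_sum_pderiv' hx.differentiableAt u'
    have ey := fderiv_eq_sum_pderiv' hy.differentiableAt v'
    rw [hx.fderiv] at ex
    rw [hy.fderiv] at ey
    unfold pLx pLy
    rw [← ex, ← ey]
    simp only [ContinuousLinearMap.comp_apply, ContinuousLinearMap.inl_apply,
      ContinuousLinearMap.inr_apply]
    rw [← map_add]
    simp
  rw [key]
  exact (hL (u t, v t)).hasFDerivAt.comp_hasDerivAt t (hu.prodMk hv)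

section Pullback

variable {n m n' m' : ℕ} {A : LocalAlgebroidData n m} {A' : LocalAlgebroidData n' m'}

lemma LocalMorphism.differentiable_φ (F : LocalMorphism A A') : Differentiable ℝ F.φ :=
  F.smooth_φ.differentiable (by simp)

lemma LocalMorphism.differentiable_Φ (F : LocalMorphism A A') (β : Fin m') (δ : Fin m) :
    Differentiable ℝ (fun z => F.Φ z β δ) := by
  have h := F.smooth_Φ.differentiable (by simp)
  exact differentiable_pi.1 (differentiable_pi.1 h β) δ

lemma pLy_pullback (F : LocalMorphism A A') {L' : (Fin n' → ℝ) × (Fin m' → ℝ) → ℝ}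
    (hL' : Differentiable ℝ L') (x : Fin n → ℝ) (y : Fin m → ℝ) (α : Fin m) :
    pLy (fun p => L' (F.φ p.1, fun β => ∑ δ, F.Φ p.1 β δ * p.2 δ)) x y α
      = ∑ β, pLy L' (F.φ x) (fun β => ∑ δ, F.Φ x β δ * y δ) β * F.Φ x β α := by
  have hv : HasDerivAt (fun s => fun β => ∑ δ, F.Φ x β δ * Function.update y α s δ)
      (fun β => F.Φ x β α) (y α) := by
    refine hasDerivAt_pi.2 fun β => ?_
    have h1 := HasDerivAt.fun_sum (u := Finset.univ) fun δ _ =>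
      (hasDerivAt_pi.1 (hasDerivAt_update y α (y α)) δ).const_mul (F.Φ x β δ)
    convert h1 using 1
    simp [Pi.single_apply]
  have h := hasDerivAt_lagrangian hL' (hasDerivAt_const (y α) (F.φ x)) hv
  have e := h.deriv
  simp only [Function.update_eq_self] at e
  rw [pLy, pderiv', e]
  simp

lemma pLx_pullback (F : LocalMorphism A A') {L' : (Fin n' → ℝ) × (Fin m' → ℝ) → ℝ}
    (hL' : Differentiable ℝ L') (x : Fin n → ℝ) (y : Fin m → ℝ) (i : Fin n) :
    pLx (fun p => L' (F.φ p.1, fun β => ∑ δ, F.Φ p.1 β δ * p.2 δ)) x y i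
      = ∑ k, pLx L' (F.φ x) (fun β => ∑ δ, F.Φ x β δ * y δ) k * pderiv' (fun z => F.φ z k) x i
        + ∑ β, pLy L' (F.φ x) (fun β => ∑ δ, F.Φ x β δ * y δ) β
            * ∑ δ, pderiv' (fun z => F.Φ z β δ) x i * y δ := by
  have hu : HasDerivAt (fun s => F.φ (Function.update x i s))
      (fun k => pderiv' (fun z => F.φ z k) x i) (x i) := by
    refine hasDerivAt_pi.2 fun k => ?_
    have hd := differentiable_pi.1 F.differentiable_φ k x
    rw [pderiv'_eq_fderiv hd]
    exact hasDerivAt_pderiv' hd i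
  have hv : HasDerivAt (fun s => fun β => ∑ δ, F.Φ (Function.update x i s) β δ * y δ)
      (fun β => ∑ δ, pderiv' (fun z => F.Φ z β δ) x i * y δ) (x i) := by
    refine hasDerivAt_pi.2 fun β => HasDerivAt.fun_sum fun δ _ => ?_
    have hd := F.differentiable_Φ β δ x
    rw [pderiv'_eq_fderiv hd]
    exact (hasDerivAt_pderiv' hd i).mul_const (y δ)
  have e := (hasDerivAt_lagrangian hL' hu hv).deriv
  simp only [Function.update_eq_self] at e
  rw [pLx, pderiv', e]

end Pullback

/-- The pointwise linear algebra of the theorem, at fixed `t` and free index `α`. Here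
`P k i = ∂_iφ^k`, `Q b δ i = ∂_iΦ^b_δ`, `c γ δ = C^γ_{αδ}`, and `dp` stands for
the time derivative of `p`. -/
lemma lagrange_pullback_algebra {n m n' m' : ℕ} (α : Fin m)
    (ρ : Fin n → Fin m → ℝ) (c : Fin m → Fin m → ℝ)
    (ρ' : Fin n' → Fin m' → ℝ) (C' : Fin m' → Fin m' → Fin m' → ℝ)
    (Φ : Fin m' → Fin m → ℝ) (P : Fin n' → Fin n → ℝ) (Q : Fin m' → Fin m → Fin n → ℝ)
    (y : Fin m → ℝ) (p dp : Fin m' → ℝ) (q : Fin n' → ℝ)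
    (adm : ∀ k, ∑ i, P k i * ρ i α = ∑ β, ρ' k β * Φ β α)
    (morph : ∀ b δ, (∑ i, (ρ i δ * Q b α i - ρ i α * Q b δ i))
      + (∑ γ, Φ b γ * c γ δ) - (∑ β, ∑ ε, C' b β ε * Φ β α * Φ ε δ) = 0)
    (sol : ∀ β, dp β + ∑ ε, ∑ b, C' b β ε * (∑ δ, Φ ε δ * y δ) * p b = ∑ k, ρ' k β * q k) :
    ∑ β, (dp β * Φ β α + p β * ∑ i, Q β α i * ∑ δ, ρ i δ * y δ)
        + ∑ δ, ∑ γ, c γ δ * y δ * ∑ b, p b * Φ b γ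
      = ∑ i, ρ i α * (∑ k, q k * P k i + ∑ b, p b * ∑ δ, Q b δ i * y δ) := by
  have hq : ∑ i, ρ i α * ∑ k, q k * P k i = ∑ β, (∑ k, ρ' k β * q k) * Φ β α := by
    calc ∑ i, ρ i α * ∑ k, q k * P k i = ∑ k, q k * ∑ i, P k i * ρ i α := by
          simp only [Finset.mul_sum]
          rw [Finset.sum_comm]
          exact Finset.sum_congr rfl fun _ _ => Finset.sum_congr rfl fun _ _ => by ring
      _ = ∑ k, q k * ∑ β, ρ' k β * Φ β α := by simp only [adm]
      _ = _ := by
          simp only [Finset.mul_sum, Finset.sum_mul]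
          rw [Finset.sum_comm]
          exact Finset.sum_congr rfl fun _ _ => Finset.sum_congr rfl fun _ _ => by ring
  have hp : ∑ b, ∑ δ, p b * y δ * ((∑ i, (ρ i δ * Q b α i - ρ i α * Q b δ i))
      + (∑ γ, Φ b γ * c γ δ) - (∑ β, ∑ ε, C' b β ε * Φ β α * Φ ε δ)) = 0 := by
    simp only [morph, mul_zero, Finset.sum_const_zero]
  simp only [Finset.sum_sub_distrib, mul_sub, mul_add, Finset.sum_add_distrib] at hp
  have e1 : ∑ b, ∑ δ, p b * y δ * ∑ i, ρ i δ * Q b α i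
      = ∑ b, p b * ∑ i, Q b α i * ∑ δ, ρ i δ * y δ := by
    simp only [Finset.mul_sum]
    refine Finset.sum_congr rfl fun _ _ => ?_
    rw [Finset.sum_comm]
    exact Finset.sum_congr rfl fun _ _ => Finset.sum_congr rfl fun _ _ => by ring
  have e2 : ∑ b, ∑ δ, p b * y δ * ∑ i, ρ i α * Q b δ i
      = ∑ i, ρ i α * ∑ b, p b * ∑ δ, Q b δ i * y δ := by
    simp only [Finset.mul_sum]
    rw [Finset.sum_comm (s := (Finset.univ : Finset (Fin n)))]
    refine Finset.sum_congr rfl fun _ _ => ?_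
    rw [Finset.sum_comm]
    exact Finset.sum_congr rfl fun _ _ => Finset.sum_congr rfl fun _ _ => by ring
  have e3 : ∑ b, ∑ δ, p b * y δ * ∑ γ, Φ b γ * c γ δ
      = ∑ δ, ∑ γ, c γ δ * y δ * ∑ b, p b * Φ b γ := by
    simp only [Finset.mul_sum]
    rw [Finset.sum_comm]
    refine Finset.sum_congr rfl fun _ _ => ?_
    rw [Finset.sum_comm]
    exact Finset.sum_congr rfl fun _ _ => Finset.sum_congr rfl fun _ _ => by ring
  have e4 : ∑ b, ∑ δ, p b * y δ * ∑ β, ∑ ε, C' b β ε * Φ β α * Φ ε δ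
      = ∑ β, (∑ ε, ∑ b, C' b β ε * (∑ δ, Φ ε δ * y δ) * p b) * Φ β α := by
    simp only [Finset.mul_sum, Finset.sum_mul]
    -- both sides are brought to the summation order `β, ε, b, δ`
    calc _ = ∑ b, ∑ β, ∑ ε, ∑ δ, p b * y δ * (C' b β ε * Φ β α * Φ ε δ) := by
          refine Finset.sum_congr rfl fun _ _ => ?_
          rw [Finset.sum_comm]
          exact Finset.sum_congr rfl fun _ _ => Finset.sum_comm
      _ = ∑ β, ∑ ε, ∑ b, ∑ δ, p b * y δ * (C' b β ε * Φ β α * Φ ε δ) := by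
          rw [Finset.sum_comm]
          exact Finset.sum_congr rfl fun _ _ => Finset.sum_comm
      _ = _ := by
          refine Finset.sum_congr rfl fun _ _ => Finset.sum_congr rfl fun _ _ =>
            Finset.sum_congr rfl fun _ _ => Finset.sum_congr rfl fun _ _ => by ring
  have e5 : ∑ β, (∑ k, ρ' k β * q k) * Φ β α = ∑ β, dp β * Φ β α
      + ∑ β, (∑ ε, ∑ b, C' b β ε * (∑ δ, Φ ε δ * y δ) * p b) * Φ β α := by
    simp only [← sol, add_mul, Finset.sum_add_distrib]
  simp only [mul_add, Finset.sum_add_distrib]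
  rw [e1, e2, e3, e4] at hp
  rw [hq, e5]
  linarith

/-- **Reconstruction theorem (coordinate form).**  Let `(φ,Φ)` be a local morphism of
Lie algebroid data and `L = L' ∘ (φ,Φ)`.  If `(x,y)` is an admissible C¹ curve whose
image curve `(φ∘x, Φ(x)y)` solves Lagrange's equations for `L'`, then `(x,y)` itself
solves Lagrange's equations for `L`. -/
theorem reconstruction_of_lagrange_equations
    {n m n' m' : ℕ} {A : LocalAlgebroidData n m} {A' : LocalAlgebroidData n' m'}
    (F : LocalMorphism A A')
    (L' : (Fin n' → ℝ) × (Fin m' → ℝ) → ℝ) (hL' : ContDiff ℝ 2 L')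
    (t₀ t₁ : ℝ) (ht : t₀ < t₁)
    (x : ℝ → Fin n → ℝ) (y : ℝ → Fin m → ℝ)
    (hx : ContDiff ℝ 1 x) (hy : ContDiff ℝ 1 y)
    (hadm : IsAdmissible A t₀ t₁ x y)
    (hsol' : IsLagrangeSolution A' L' t₀ t₁ (fun t => F.φ (x t))
      (fun t β => ∑ α, F.Φ (x t) β α * y t α)) :
    IsLagrangeSolution A
      (fun p => L' (F.φ p.1, fun β => ∑ δ, F.Φ p.1 β δ * p.2 δ)) t₀ t₁ x y := by
  have hd' : Differentiable ℝ L' := hL'.differentiable (by norm_num)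
  have hxd : Differentiable ℝ x := hx.differentiable (by norm_num)
  have hyd : Differentiable ℝ y := hy.differentiable (by norm_num)
  intro α t htm
  simp only [pLy_pullback F hd', pLx_pullback F hd']
  have hx' : HasDerivAt x (fun i => ∑ δ, A.ρ (x t) i δ * y t δ) t := by
    refine hasDerivAt_pi.2 fun i => ?_
    rw [← hadm t htm i]
    exact (differentiable_pi.1 hxd i t).hasDerivAt
  have hΦ : ∀ β δ, HasDerivAt (fun s => F.Φ (x s) β δ)
      (∑ i, pderiv' (fun z => F.Φ z β δ) (x t) i * ∑ ε, A.ρ (x t) i ε * y t ε) t := by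
    intro β δ
    exact hasDerivAt_comp_pderiv' (hg := hx') (F.differentiable_Φ β δ (x t))
  -- the C² hypothesis on the Lagrangian makes the momenta differentiable, so that their `deriv`
  -- in Lagrange's equations is not a junk value
  have hp : ∀ β, DifferentiableAt ℝ (fun s => pLy L' (F.φ (x s))
      (fun β => ∑ δ, F.Φ (x s) β δ * y s δ) β) t := by
    intro β
    simp only [pLy_eq_fderiv hd']
    have h2 : Differentiable ℝ (fderiv ℝ L') :=
      (hL'.fderiv_right (m := 1) (by norm_num)).differentiable (by norm_num)
    have hv : DifferentiableAt ℝ (fun s => fun β => ∑ δ, F.Φ (x s) β δ * y s δ) t := by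
      refine differentiableAt_pi.2 fun β => DifferentiableAt.fun_sum fun δ _ => ?_
      exact (hΦ β δ).differentiableAt.mul (differentiable_pi.1 hyd δ t)
    have hu : DifferentiableAt ℝ (fun s => F.φ (x s)) t :=
      (F.differentiable_φ (x t)).comp t (hxd t)
    have hc : DifferentiableAt ℝ (fun s => fderiv ℝ L'
        (F.φ (x s), fun β => ∑ δ, F.Φ (x s) β δ * y s δ)) t :=
      (h2 (F.φ (x t), fun β => ∑ δ, F.Φ (x t) β δ * y t δ)).comp t (hu.prodMk hv)
    exact hc.clm_apply (differentiableAt_const _)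
  have hD := (HasDerivAt.fun_sum (u := Finset.univ) fun β _ =>
    (hp β).hasDerivAt.mul (hΦ β α)).deriv
  simp only [Pi.mul_apply] at hD
  have key := lagrange_pullback_algebra α (A.ρ (x t)) (fun γ δ => A.C (x t) γ α δ)
    (A'.ρ (F.φ (x t))) (A'.C (F.φ (x t))) (F.Φ (x t))
    (fun k i => pderiv' (fun z => F.φ z k) (x t) i)
    (fun b δ i => pderiv' (fun z => F.Φ z b δ) (x t) i) (y t) _ _ _
    (fun k => F.adm (x t) k α) (fun b δ => F.morph (x t) b α δ)
    (fun β => hsol' β t htm)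
  rw [← key]
  congr 1
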